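/- Let k ≥ 3 and 1 ≤ j ≤ k−1 be integers, let s ≥ 0 be a fixed integer, and suppose p = (j·log n + s·log log n + c_n)/C(n,k−j) where c_n = o(log n) and c_n → ∞. Let D_s be the number of j-sets of degree exactly s in H^k(n,p). Then with high probability D_s = 0. -/

import Mathlib

open Filter Asymptotics

open scoped Classical

noncomputable section

/-- The collection of all `k`-element subsets of the vertex set `Fin n`,
    i.e. all potential edges of a `k`-uniform hypergraph on `n` vertices. -/
def kSets (n k : ℕ) : Finset (Finset (Fin n)) :=
  Finset.powersetCard k (Finset.univ : Finset (Fin n))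

/-- The probability that the binomial random `k`-uniform hypergraph `H^k(n,p)`
    (each `k`-set an edge independently with probability `p`) has property `Q`. -/
def binomProb (n k : ℕ) (p : ℝ) (Q : Finset (Finset (Fin n)) → Prop) : ℝ :=
  ∑ H ∈ (kSets n k).powerset,
    (if Q H then p ^ H.card * (1 - p) ^ ((kSets n k).card - H.card) else 0)

/-- The expectation of a real-valued random variable `X` of `H^k(n,p)`. -/
def binomExp (n k : ℕ) (p : ℝ) (X : Finset (Finset (Fin n)) → ℝ) : ℝ :=
  ∑ H ∈ (kSets n k).powerset,
    p ^ H.card * (1 - p) ^ ((kSets n k).card - H.card) * X H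

/-- The degree of a vertex set `J` in the hypergraph with edge set `H`:
    the number of edges containing `J`. -/
def setDegree {n : ℕ} (H : Finset (Finset (Fin n))) (J : Finset (Fin n)) : ℕ :=
  (H.filter (fun e => J ⊆ e)).card

/-- `J` is isolated in `H`: it is contained in no edge. -/
def IsIsolatedSet {n : ℕ} (H : Finset (Finset (Fin n))) (J : Finset (Fin n)) : Prop :=
  ∀ e ∈ H, ¬ J ⊆ e

/-- Two sets `J1`, `J2` are `j`-connected in the hypergraph with edge set `H`:
    there is a walk of edges from one to the other in which consecutive edges
    intersect in at least `j` vertices. -/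
def JConn {n : ℕ} (j : ℕ) (H : Finset (Finset (Fin n))) (J1 J2 : Finset (Fin n)) : Prop :=
  ∃ e1 ∈ H, ∃ e2 ∈ H, J1 ⊆ e1 ∧ J2 ⊆ e2 ∧
    Relation.ReflTransGen (fun e f => e ∈ H ∧ f ∈ H ∧ j ≤ (e ∩ f).card) e1 e2

/-- The hypergraph with edge set `H` is `j`-connected:
    all `j`-sets lie in a single `j`-component, i.e. are pairwise `j`-connected. -/
def JConnectedHG (n j : ℕ) (H : Finset (Finset (Fin n))) : Prop :=
  ∀ J1 J2 : Finset (Fin n), J1.card = j → J2.card = j → JConn j H J1 J2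

/-- `C` is a `j`-component of `H`: a maximal nonempty set of pairwise `j`-connected `j`-sets. -/
def IsJComponent (n j : ℕ) (H : Finset (Finset (Fin n))) (C : Finset (Finset (Fin n))) : Prop :=
  C.Nonempty ∧ (∀ J ∈ C, J.card = j) ∧ (∀ J1 ∈ C, ∀ J2 ∈ C, JConn j H J1 J2) ∧
    ∀ J : Finset (Fin n), J.card = j → (∃ J' ∈ C, JConn j H J J') → J ∈ C

/-- `D_s`: the number of `j`-sets of degree exactly `s`. -/
def numDegSets (n j s : ℕ) (H : Finset (Finset (Fin n))) : ℕ :=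
  ((Finset.powersetCard j (Finset.univ : Finset (Fin n))).filter
    (fun J => setDegree H J = s)).card

/-- The Poisson probability mass function with mean `lam`. -/
def poissonPMF (lam : ℝ) (i : ℕ) : ℝ := Real.exp (-lam) * lam ^ i / (Nat.factorial i)

/-- Total variation distance between the distribution of `D_s` in `H^k(n,p)`
    and the Poisson distribution with mean `lam`. -/
def dTVpoisson (n k j s : ℕ) (p lam : ℝ) : ℝ :=
  (1 / 2) * ∑' i : ℕ, |binomProb n k p (fun H => numDegSets n j s H = i) - poissonPMF lam i|

/-- The probability that the uniform random hypergraph `H^k(n,M)` (chosen uniformly among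
    all `k`-uniform hypergraphs on `Fin n` with exactly `M` edges) has property `Q`. -/
def uniformProb (n k M : ℕ) (Q : Finset (Finset (Fin n)) → Prop) : ℝ :=
  (((Finset.powersetCard M (kSets n k)).filter Q).card : ℝ) /
    ((Finset.powersetCard M (kSets n k)).card : ℝ)


/-!
The argument is the first moment method. The degree of a fixed `j`-set is a `Bin(N, p)` variable
with `N = C(n-j, k-j)`. Put `λ = p * C(n, k-j)`. Since `C(n, k-j) - N = O(C(n, k-j) / n)` and
`λ = O(log n)`, replacing `N p` by `λ` in the exponent costs only a constant factor, so
`E[D_s] = O(n ^ j * λ ^ s * exp (-λ))`. The choice of `λ` makes `exp (-λ)` equal to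
`n ^ (-j) * (log n) ^ (-s) * exp (-c_n)`, whence `E[D_s] = O(exp (-c_n))`.
-/

section BinomialSubset

variable {α R : Type*} [DecidableEq α] [CommSemiring R] {A T U : Finset α}

lemma sum_pow_card_mul_pow_of_inter_eq (a b : R) (hA : A ⊆ U) (hT : T ⊆ A) :
    ∑ H ∈ U.powerset with H ∩ A = T, a ^ H.card * b ^ (U.card - H.card) =
      a ^ T.card * b ^ (A.card - T.card) * (a + b) ^ (U.card - A.card) := by
  rw [← Finset.card_sdiff_of_subset hA, ← Finset.sum_pow_mul_eq_add_pow, Finset.mul_sum]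
  refine Finset.sum_nbij' (· \ A) (T ∪ ·) ?_ ?_ ?_ ?_ ?_
  · intro H hH
    rw [Finset.mem_filter, Finset.mem_powerset] at hH
    exact Finset.mem_powerset.2 (Finset.sdiff_subset_sdiff hH.1 subset_rfl)
  · intro Y hY
    rw [Finset.mem_powerset, Finset.subset_sdiff] at hY
    rw [Finset.mem_filter, Finset.mem_powerset, Finset.union_inter_distrib_right,
      Finset.inter_eq_left.2 hT, Finset.disjoint_iff_inter_eq_empty.1 hY.2, Finset.union_empty]
    exact ⟨Finset.union_subset (hT.trans hA) hY.1, rfl⟩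
  · intro H hH
    rw [← (Finset.mem_filter.1 hH).2, Finset.union_comm, Finset.sdiff_union_inter]
  · intro Y hY
    rw [Finset.mem_powerset, Finset.subset_sdiff] at hY
    rw [Finset.union_sdiff_distrib, Finset.sdiff_eq_empty_iff_subset.2 hT, Finset.empty_union,
      Finset.sdiff_eq_self_of_disjoint hY.2]
  · intro H hH
    rw [Finset.mem_filter, Finset.mem_powerset] at hH
    have hcard : T.card + (H \ A).card = H.card := by
      rw [← hH.2, Finset.card_inter_add_card_sdiff]
    have hAU := Finset.card_sdiff_add_card_eq_card hA
    have hTA := Finset.card_le_card hT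
    have hYU := Finset.card_le_card (Finset.sdiff_subset_sdiff hH.1 (subset_refl A))
    have hsub : U.card - H.card = (A.card - T.card) + ((U \ A).card - (H \ A).card) := by omega
    rw [hsub, ← hcard, pow_add, pow_add]
    ring

lemma sum_pow_card_mul_pow_of_card_inter_eq (a b : R) (hA : A ⊆ U) (s : ℕ) :
    ∑ H ∈ U.powerset with (H ∩ A).card = s, a ^ H.card * b ^ (U.card - H.card) =
      A.card.choose s * (a ^ s * b ^ (A.card - s)) * (a + b) ^ (U.card - A.card) := by
  have htrace : ∀ H ∈ U.powerset.filter (fun H => (H ∩ A).card = s),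
      H ∩ A ∈ A.powersetCard s := fun H hH =>
    Finset.mem_powersetCard.2 ⟨Finset.inter_subset_right, (Finset.mem_filter.1 hH).2⟩
  rw [← Finset.sum_fiberwise_of_maps_to htrace]
  calc ∑ T ∈ A.powersetCard s, ∑ H ∈ (U.powerset.filter (fun H => (H ∩ A).card = s)) with
          H ∩ A = T, a ^ H.card * b ^ (U.card - H.card)
      = ∑ _T ∈ A.powersetCard s, a ^ s * b ^ (A.card - s) * (a + b) ^ (U.card - A.card) := by
        refine Finset.sum_congr rfl fun T hT => ?_
        obtain ⟨hTA, rfl⟩ := Finset.mem_powersetCard.1 hT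
        rw [← sum_pow_card_mul_pow_of_inter_eq a b hA hTA, Finset.filter_filter]
        congr 1
        refine Finset.filter_congr fun H _ => and_iff_right_of_imp ?_
        rintro rfl
        rfl
    _ = A.card.choose s * (a ^ s * b ^ (A.card - s)) * (a + b) ^ (U.card - A.card) := by
        rw [Finset.sum_const, Finset.card_powersetCard, nsmul_eq_mul, ← mul_assoc]

end BinomialSubset

section FirstMoment

variable {n k : ℕ} {p : ℝ}

lemma binomExp_one (n k : ℕ) (p : ℝ) : binomExp n k p (fun _ => 1) = 1 := by
  simp only [binomExp, mul_one, Finset.sum_pow_mul_eq_add_pow, add_sub_cancel, one_pow]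

lemma binomExp_sub (n k : ℕ) (p : ℝ) (X Y : Finset (Finset (Fin n)) → ℝ) :
    binomExp n k p (fun H => X H - Y H) = binomExp n k p X - binomExp n k p Y := by
  simp only [binomExp, mul_sub, Finset.sum_sub_distrib]

lemma binomExp_sum {ι : Type*} (n k : ℕ) (p : ℝ) (t : Finset ι)
    (X : ι → Finset (Finset (Fin n)) → ℝ) :
    binomExp n k p (fun H => ∑ i ∈ t, X i H) = ∑ i ∈ t, binomExp n k p (X i) := by
  simp only [binomExp, Finset.mul_sum]
  exact Finset.sum_comm

lemma binomExp_mono (hp0 : 0 ≤ p) (hp1 : p ≤ 1) {X Y : Finset (Finset (Fin n)) → ℝ}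
    (hXY : ∀ H, X H ≤ Y H) : binomExp n k p X ≤ binomExp n k p Y :=
  Finset.sum_le_sum fun H _ => mul_le_mul_of_nonneg_left (hXY H)
    (mul_nonneg (pow_nonneg hp0 _) (pow_nonneg (sub_nonneg.2 hp1) _))

lemma binomProb_eq_sum_filter (n k : ℕ) (p : ℝ) (Q : Finset (Finset (Fin n)) → Prop)
    [DecidablePred Q] :
    binomProb n k p Q =
      ∑ H ∈ (kSets n k).powerset with Q H, p ^ H.card * (1 - p) ^ ((kSets n k).card - H.card) := by
  rw [Finset.sum_filter, binomProb]
  congr! 2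

lemma binomProb_eq_binomExp_indicator (n k : ℕ) (p : ℝ) (Q : Finset (Finset (Fin n)) → Prop)
    [DecidablePred Q] :
    binomProb n k p Q = binomExp n k p (fun H => if Q H then 1 else 0) := by
  simp only [binomProb_eq_sum_filter, Finset.sum_filter, binomExp, mul_ite, mul_one, mul_zero]

lemma binomProb_le_one (hp0 : 0 ≤ p) (hp1 : p ≤ 1) (Q : Finset (Finset (Fin n)) → Prop) :
    binomProb n k p Q ≤ 1 := by
  rw [binomProb_eq_binomExp_indicator]
  refine (binomExp_mono hp0 hp1 fun H => ?_).trans_eq (binomExp_one n k p)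
  split_ifs <;> norm_num

lemma one_sub_binomExp_le_binomProb_eq_zero (hp0 : 0 ≤ p) (hp1 : p ≤ 1)
    (X : Finset (Finset (Fin n)) → ℕ) :
    1 - binomExp n k p (fun H => X H) ≤ binomProb n k p (fun H => X H = 0) :=
  calc 1 - binomExp n k p (fun H => X H)
      = binomExp n k p (fun H => 1 - X H) := by rw [binomExp_sub, binomExp_one]
    _ ≤ binomExp n k p (fun H => if X H = 0 then 1 else 0) := by
        refine binomExp_mono hp0 hp1 fun H => ?_
        split_ifs with hX
        · simp [hX]
        · simpa using Nat.one_le_iff_ne_zero.2 hX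
    _ = binomProb n k p (fun H => X H = 0) := (binomProb_eq_binomExp_indicator n k p _).symm

end FirstMoment

section DegreeDistribution

variable {n k j : ℕ}

lemma binomProb_setDegree_eq (hjk : j ≤ k) (p : ℝ) (s : ℕ) {J : Finset (Fin n)}
    (hJ : J.card = j) :
    binomProb n k p (fun H => setDegree H J = s) =
      ((n - j).choose (k - j)).choose s * (p ^ s * (1 - p) ^ ((n - j).choose (k - j) - s)) := by
  have hstar : ((kSets n k).filter (J ⊆ ·)).card = (n - j).choose (k - j) := by
    rw [kSets, Finset.card_filter_powersetCard_subset _ _ _ (Finset.subset_univ J) (hJ ▸ hjk), hJ,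
      Finset.card_univ, Fintype.card_fin]
  have hdeg : ∀ H ∈ (kSets n k).powerset,
      setDegree H J = (H ∩ (kSets n k).filter (J ⊆ ·)).card := fun H hH => by
    rw [setDegree, Finset.inter_filter, Finset.inter_eq_left.2 (Finset.mem_powerset.1 hH)]
  rw [binomProb_eq_sum_filter, Finset.filter_congr fun H hH => by rw [hdeg H hH],
    sum_pow_card_mul_pow_of_card_inter_eq _ _ (Finset.filter_subset _ _), hstar, add_sub_cancel,
    one_pow, mul_one]

lemma binomExp_numDegSets (hjk : j ≤ k) (p : ℝ) (s : ℕ) :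
    binomExp n k p (fun H => numDegSets n j s H) =
      n.choose j * (((n - j).choose (k - j)).choose s *
        (p ^ s * (1 - p) ^ ((n - j).choose (k - j) - s))) := by
  simp only [numDegSets, Finset.card_filter, Nat.cast_sum, Nat.cast_ite, Nat.cast_one,
    Nat.cast_zero]
  rw [binomExp_sum]
  rw [Finset.sum_congr rfl fun J hJ => (binomProb_eq_binomExp_indicator n k p _).symm.trans
      (binomProb_setDegree_eq hjk p s (Finset.mem_powersetCard.1 hJ).2),
    Finset.sum_const, Finset.card_powersetCard, Finset.card_univ, Fintype.card_fin, nsmul_eq_mul]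

end DegreeDistribution

section Estimates

lemma choose_succ_le_choose_sub_add (n m j : ℕ) :
    n.choose (m + 1) ≤ (n - j).choose (m + 1) + j * n.choose m := by
  induction j with
  | zero => simp
  | succ j ih =>
    have hpascal : (n - j).choose (m + 1) ≤ (n - (j + 1)).choose (m + 1) + n.choose m := by
      rw [← Nat.sub_sub]
      rcases hnj : n - j with _ | a
      · simp
      · rw [Nat.choose_succ_succ, add_tsub_cancel_right, add_comm]
        exact Nat.add_le_add_left (Nat.choose_le_choose m (by omega)) _
    linarith

lemma mul_choose_le_mul_choose_succ {n m : ℕ} (h : 2 * m ≤ n) :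
    n * n.choose m ≤ 2 * (m + 1) * n.choose (m + 1) :=
  calc n * n.choose m ≤ 2 * (n - m) * n.choose m := Nat.mul_le_mul_right _ (by omega)
    _ = 2 * (n.choose m * (n - m)) := by ring
    _ = 2 * (m + 1) * n.choose (m + 1) := by rw [← Nat.choose_succ_right_eq]; ring

lemma div_choose_succ_mul_choose_le_one {n m : ℕ} {lam : ℝ} (hmn : 2 * (m + 1) ≤ n)
    (hlam : 2 * (m + 1) * lam ≤ n) :
    lam / n.choose (m + 1) * n.choose m ≤ 1 := by
  have hchoose : (n * n.choose m : ℝ) ≤ 2 * (m + 1) * n.choose (m + 1) := by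
    exact_mod_cast mul_choose_le_mul_choose_succ (by omega)
  have hpos : (0 : ℝ) < n.choose (m + 1) := by exact_mod_cast Nat.choose_pos (by omega)
  rw [div_mul_eq_mul_div, div_le_one hpos]
  refine le_of_mul_le_mul_left ?_ (by positivity : (0 : ℝ) < 2 * (m + 1))
  calc 2 * (m + 1) * (lam * n.choose m) = 2 * (m + 1) * lam * n.choose m := by ring
    _ ≤ n * n.choose m := by gcongr
    _ ≤ 2 * (m + 1) * n.choose (m + 1) := hchoose

lemma div_choose_succ_le_one {n m : ℕ} {lam : ℝ} (hlam0 : 0 ≤ lam) (hmn : 2 * (m + 1) ≤ n)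
    (hlam : 2 * (m + 1) * lam ≤ n) : lam / n.choose (m + 1) ≤ 1 := by
  have hone : (1 : ℝ) ≤ n.choose m := by exact_mod_cast Nat.choose_pos (by omega)
  exact (le_mul_of_one_le_right (by positivity) hone).trans
    (div_choose_succ_mul_choose_le_one hmn hlam)

lemma choose_mul_pow_mul_one_sub_pow_le {p : ℝ} (hp0 : 0 ≤ p) (hp1 : p ≤ 1) (N s : ℕ) :
    N.choose s * (p ^ s * (1 - p) ^ (N - s)) ≤ (N * p) ^ s * Real.exp (s - N * p) := by
  have hpow : (1 - p) ^ (N - s) ≤ Real.exp (s - N * p) :=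
    calc (1 - p) ^ (N - s) ≤ Real.exp (-p) ^ (N - s) :=
          pow_le_pow_left₀ (sub_nonneg.2 hp1) (Real.one_sub_le_exp_neg p) _
      _ = Real.exp (-((N - s : ℕ) * p)) := by rw [← Real.exp_nat_mul, mul_neg]
      _ ≤ Real.exp (s - N * p) := by
        have hsub : (N : ℝ) - s ≤ (N - s : ℕ) := by
          rw [sub_le_iff_le_add]; exact_mod_cast le_tsub_add
        rw [Real.exp_le_exp]
        nlinarith [mul_le_mul_of_nonneg_right hsub hp0,
          mul_le_mul_of_nonneg_left hp1 (Nat.cast_nonneg (α := ℝ) s)]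
  calc N.choose s * (p ^ s * (1 - p) ^ (N - s))
      ≤ (N : ℝ) ^ s * (p ^ s * Real.exp (s - N * p)) := by
        gcongr
        exact_mod_cast Nat.choose_le_pow N s
    _ = (N * p) ^ s * Real.exp (s - N * p) := by rw [mul_pow, mul_assoc]

lemma binomExp_numDegSets_le {n j m : ℕ} {lam : ℝ} (s : ℕ) (hlam0 : 0 ≤ lam)
    (hmn : 2 * (m + 1) ≤ n) (hlam : 2 * (m + 1) * lam ≤ n) :
    binomExp n (j + (m + 1)) (lam / n.choose (m + 1)) (fun H => numDegSets n j s H) ≤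
      Real.exp (j + s) * (n ^ j * (lam ^ s * Real.exp (-lam))) := by
  set p := lam / n.choose (m + 1)
  set N := (n - j).choose (m + 1)
  have hp0 : 0 ≤ p := by positivity
  have hpM : n.choose (m + 1) * p = lam :=
    mul_div_cancel₀ _ (by exact_mod_cast (Nat.choose_pos (by omega)).ne')
  have hNp_le : N * p ≤ lam := by
    rw [← hpM]
    gcongr
    exact Nat.choose_le_choose (m + 1) (Nat.sub_le n j)
  have hle_Np : lam - j ≤ N * p := by
    have hM : (n.choose (m + 1) : ℝ) ≤ N + j * n.choose m := by
      exact_mod_cast choose_succ_le_choose_sub_add n m j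
    have hpm : p * n.choose m ≤ 1 := div_choose_succ_mul_choose_le_one hmn hlam
    rw [sub_le_iff_le_add]
    calc lam = n.choose (m + 1) * p := hpM.symm
      _ ≤ (N + j * n.choose m) * p := by gcongr
      _ = N * p + j * (p * n.choose m) := by ring
      _ ≤ N * p + j := by gcongr; exact mul_le_of_le_one_right (Nat.cast_nonneg j) hpm
  rw [binomExp_numDegSets (Nat.le_add_right _ _), Nat.add_sub_cancel_left]
  calc n.choose j * (N.choose s * (p ^ s * (1 - p) ^ (N - s)))
      ≤ n.choose j * ((N * p) ^ s * Real.exp (s - N * p)) :=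
        mul_le_mul_of_nonneg_left (choose_mul_pow_mul_one_sub_pow_le hp0
          (div_choose_succ_le_one hlam0 hmn hlam) N s) (Nat.cast_nonneg _)
    _ ≤ n ^ j * (lam ^ s * Real.exp (j + s + -lam)) := by
        gcongr
        · exact_mod_cast Nat.choose_le_pow n j
        · linarith
    _ = Real.exp (j + s) * (n ^ j * (lam ^ s * Real.exp (-lam))) := by
        rw [Real.exp_add]
        ring

lemma one_sub_le_binomProb_numDegSets_eq_zero {n j m : ℕ} {lam : ℝ} (s : ℕ) (hlam0 : 0 ≤ lam)
    (hmn : 2 * (m + 1) ≤ n) (hlam : 2 * (m + 1) * lam ≤ n) :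
    1 - Real.exp (j + s) * (n ^ j * (lam ^ s * Real.exp (-lam))) ≤
      binomProb n (j + (m + 1)) (lam / n.choose (m + 1)) (fun H => numDegSets n j s H = 0) :=
  (sub_le_sub_left (binomExp_numDegSets_le s hlam0 hmn hlam) 1).trans
    (one_sub_binomExp_le_binomProb_eq_zero (div_nonneg hlam0 (Nat.cast_nonneg _))
      (div_choose_succ_le_one hlam0 hmn hlam) _)

end Estimates

section Asymptotics

/-- The parameter `λ_n = j log n + s log log n + c_n`, for which `p = λ_n / C(n, k-j)`; it is
asymptotically the expected degree of a `j`-set. -/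
def meanDegree (j s : ℕ) (c : ℕ → ℝ) (n : ℕ) : ℝ :=
  j * Real.log n + s * Real.log (Real.log n) + c n

lemma tendsto_log_natCast_atTop : Tendsto (fun n : ℕ => Real.log n) atTop atTop :=
  Real.tendsto_log_atTop.comp tendsto_natCast_atTop_atTop

variable {c : ℕ → ℝ}

lemma meanDegree_isBigO_log (j s : ℕ) (hc : c =O[atTop] fun n : ℕ => Real.log n) :
    meanDegree j s c =O[atTop] fun n : ℕ => Real.log n := by
  have hloglog : (fun n : ℕ => Real.log (Real.log n)) =O[atTop] fun n : ℕ => Real.log n :=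
    (Real.isLittleO_log_id_atTop.comp_tendsto tendsto_log_natCast_atTop).isBigO
  exact (((isBigO_refl _ _).const_mul_left _).add (hloglog.const_mul_left _)).add hc

lemma eventually_meanDegree_nonneg (j s : ℕ) (hc : Tendsto c atTop atTop) :
    ∀ᶠ n in atTop, 0 ≤ meanDegree j s c n := by
  filter_upwards [tendsto_log_natCast_atTop.eventually_ge_atTop 1, hc.eventually_ge_atTop 0]
    with n hlog hcn
  have hloglog : 0 ≤ Real.log (Real.log n) := Real.log_nonneg hlog
  unfold meanDegree
  positivity

lemma eventually_mul_meanDegree_le (j s : ℕ) (hc : c =O[atTop] fun n : ℕ => Real.log n) (a : ℝ) :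
    ∀ᶠ n : ℕ in atTop, a * meanDegree j s c n ≤ n := by
  have hlog : (fun n : ℕ => Real.log n) =o[atTop] fun n : ℕ => (n : ℝ) :=
    Real.isLittleO_log_id_atTop.comp_tendsto tendsto_natCast_atTop_atTop
  filter_upwards [(((meanDegree_isBigO_log j s hc).trans_isLittleO hlog).const_mul_left a).bound
    one_pos] with n hn
  simpa using (le_abs_self _).trans hn

lemma exp_neg_meanDegree (j s : ℕ) (c : ℕ → ℝ) {n : ℕ} (hn : 1 < n) :
    Real.exp (-meanDegree j s c n) = ((n : ℝ) ^ j * Real.log n ^ s)⁻¹ * Real.exp (-c n) := by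
  have hlog : 0 < Real.log n := Real.log_pos (by exact_mod_cast hn)
  rw [meanDegree, neg_add, Real.exp_add, Real.exp_neg, Real.exp_add, Real.exp_nat_mul,
    Real.exp_nat_mul, Real.exp_log hlog, Real.exp_log (by positivity)]

lemma pow_mul_exp_neg_meanDegree_isBigO (j s : ℕ) (hc : c =O[atTop] fun n : ℕ => Real.log n) :
    (fun n : ℕ => (n : ℝ) ^ j * (meanDegree j s c n ^ s * Real.exp (-meanDegree j s c n)))
      =O[atTop] fun n => Real.exp (-c n) := by
  have hpow := (meanDegree_isBigO_log j s hc).pow s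
  refine ((isBigO_refl (fun n : ℕ => (n : ℝ) ^ j) atTop).mul
    (hpow.mul (isBigO_refl (fun n => Real.exp (-meanDegree j s c n)) atTop))).trans_eventuallyEq ?_
  filter_upwards [eventually_gt_atTop 1] with n hn
  have hlog : 0 < Real.log n := Real.log_pos (by exact_mod_cast hn)
  rw [exp_neg_meanDegree j s c hn]
  field_simp

end Asymptotics

theorem no_degree_s_sets_general (k j s : ℕ) (hjk : j < k) (p c : ℕ → ℝ)
    (hc : c =O[atTop] fun n : ℕ => Real.log n)
    (hcinf : Tendsto c atTop atTop)
    (hp : ∀ n : ℕ, p n =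
      ((j : ℝ) * Real.log n + (s : ℝ) * Real.log (Real.log n) + c n) /
        (n.choose (k - j) : ℝ)) :
    Tendsto (fun n : ℕ => binomProb n k (p n) (fun H => numDegSets n j s H = 0)) atTop
      (nhds 1) := by
  obtain ⟨m, rfl⟩ : ∃ m, k = j + (m + 1) := Nat.exists_eq_add_of_lt hjk
  have hpn (n : ℕ) : p n = meanDegree j s c n / n.choose (m + 1) := by
    rw [hp n, Nat.add_sub_cancel_left, meanDegree]
  have hlim : Tendsto (fun n : ℕ => 1 - Real.exp (j + s) *
      (n ^ j * (meanDegree j s c n ^ s * Real.exp (-meanDegree j s c n)))) atTop (nhds 1) := by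
    simpa using (((pow_mul_exp_neg_meanDegree_isBigO j s hc).const_mul_left _).trans_tendsto
      (Real.tendsto_exp_neg_atTop_nhds_zero.comp hcinf)).const_sub 1
  have hrange : ∀ᶠ n : ℕ in atTop, 0 ≤ meanDegree j s c n ∧ 2 * (m + 1) ≤ n ∧
      2 * (m + 1) * meanDegree j s c n ≤ n :=
    (eventually_meanDegree_nonneg j s hcinf).and
      ((eventually_ge_atTop _).and (eventually_mul_meanDegree_le j s hc _))
  refine tendsto_of_tendsto_of_tendsto_of_le_of_le' hlim tendsto_const_nhds ?_ ?_ <;>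
    filter_upwards [hrange] with n ⟨hnonneg, hmn, hle⟩ <;> rw [hpn]
  · exact one_sub_le_binomProb_numDegSets_eq_zero s hnonneg hmn hle
  · exact binomProb_le_one (div_nonneg hnonneg (Nat.cast_nonneg _))
      (div_choose_succ_le_one hnonneg hmn hle) _

/-- **Theorem 2(i).** For `k ≥ 3`, `1 ≤ j ≤ k-1`, a fixed integer `s ≥ 0`, and
`p = (j log n + s log log n + c_n)/C(n,k-j)` with `c_n = o(log n)` and `c_n → ∞`,
with high probability `D_s = 0` in `H^k(n,p)`. -/
theorem no_degree_s_sets (k j s : ℕ) (hk : 3 ≤ k) (hj : 1 ≤ j) (hjk : j ≤ k - 1)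
    (p c : ℕ → ℝ)
    (hc : c =o[atTop] fun n : ℕ => Real.log n)
    (hcinf : Tendsto c atTop atTop)
    (hp : ∀ n : ℕ, p n =
      ((j : ℝ) * Real.log n + (s : ℝ) * Real.log (Real.log n) + c n) /
        (n.choose (k - j) : ℝ)) :
    Tendsto (fun n : ℕ => binomProb n k (p n) (fun H => numDegSets n j s H = 0)) atTop
      (nhds 1) := by
  exact no_degree_s_sets_general k j s (by omega) p c hc.isBigO hcinf hp

end
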